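/- Let q ≥ 1 be an integer, H ∈ (1/2, 1) and t > 0. Define the kernel L_t^{H,q} : ℝ^q → ℝ by L_t^{H,q}(y_1, …, y_q) = ∫_0^t ∏_{i=1}^q (u - y_i)_+^{-(1/2 + (1-H)/q)} du. Then L_t^{H,q} is square integrable on ℝ^q, i.e. ∫_{ℝ^q} ( L_t^{H,q}(y_1,…,y_q) )² dy_1 … dy_q < ∞. -/

import Mathlib

open MeasureTheory

/-- `(s)_+^a`, equal to `s^a` when `s > 0` and to `0` otherwise. -/
noncomputable def posPow (s a : ℝ) : ℝ := if 0 < s then s ^ a else 0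

/-- The kernel of the Hermite process of order `q` and self-similarity index `H`:
`L_t^{H,q}(y₁,…,y_q) = ∫_0^t ∏_{i=1}^q (u - yᵢ)_+^{-(1/2 + (1-H)/q)} du`. -/
noncomputable def hermiteKernel (q : ℕ) (H t : ℝ) (y : Fin q → ℝ) : ℝ :=
  ∫ u in Set.Ioo (0:ℝ) t, ∏ i : Fin q, posPow (u - y i) (-(1/2 + (1 - H) / q))

/-!
Expanding the square and applying Tonelli's theorem,
`‖L‖² = ∫∫_{(0,t)²} (∫ (u - y)_+^a (v - y)_+^a dy)^q du dv` with `a = -(1/2 + (1-H)/q)`.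
Because `-1 < a < -1/2`, the inner integral is finite for `u ≠ v` and by homogeneity equals a
constant times `|u - v|^(2a+1)`. Its `q`-th power is a constant times `|u - v|^(2H-2)`, which is
integrable on the bounded square since `2H - 2 > -1`.
-/

open scoped ENNReal Pointwise

theorem lmarginal_prod_eq_prod {ι : Type*} [DecidableEq ι] {X : ι → Type*}
    [∀ i, MeasurableSpace (X i)] {μ : ∀ i, Measure (X i)} [∀ i, SigmaFinite (μ i)]
    {f : ∀ i, X i → ℝ≥0∞} (hf : ∀ i, Measurable (f i)) (s : Finset ι) (x : ∀ i, X i) :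
    lmarginal μ s (fun y => ∏ i ∈ s, f i (y i)) x = ∏ i ∈ s, ∫⁻ z, f i z ∂μ i := by
  have prod_measurable (s : Finset ι) : Measurable fun y : ∀ i, X i => ∏ i ∈ s, f i (y i) :=
    Finset.measurable_prod _ fun i _ => (hf i).comp (measurable_pi_apply i)
  induction s using Finset.induction_on generalizing x with
  | empty => simp
  | insert i s hi ih =>
    have integrate_i (y : ∀ i, X i) :
        ∫⁻ z, ∏ j ∈ insert i s, f j (Function.update y i z j) ∂μ i =
          (∫⁻ z, f i z ∂μ i) * ∏ j ∈ s, f j (y j) := by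
      rw [← lintegral_mul_const _ (hf i)]
      refine lintegral_congr fun z => ?_
      rw [Finset.prod_insert hi, Function.update_self]
      congr 1
      refine Finset.prod_congr rfl fun j hj => ?_
      rw [Function.update_of_ne (ne_of_mem_of_not_mem hj hi)]
    rw [lmarginal_insert' _ (prod_measurable _) hi, Finset.prod_insert hi, ← ih x]
    simp only [integrate_i]
    exact lintegral_const_mul _ ((prod_measurable s).comp measurable_updateFinset)

theorem lintegral_fintype_prod_eq_prod {ι : Type*} [Fintype ι] {X : ι → Type*}
    [∀ i, MeasurableSpace (X i)] (μ : ∀ i, Measure (X i)) [∀ i, SigmaFinite (μ i)]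
    {f : ∀ i, X i → ℝ≥0∞} (hf : ∀ i, Measurable (f i)) :
    ∫⁻ x, ∏ i, f i (x i) ∂Measure.pi μ = ∏ i, ∫⁻ z, f i z ∂μ i := by
  classical
  rcases isEmpty_or_nonempty (∀ i, X i) with hX | ⟨⟨x⟩⟩
  · obtain ⟨i, hi⟩ := isEmpty_pi.mp hX
    rw [lintegral_of_isEmpty, Finset.prod_eq_zero (Finset.mem_univ i) (lintegral_of_isEmpty ..)]
  · rw [lintegral_eq_lmarginal_univ x, lmarginal_prod_eq_prod hf]

theorem lintegral_sq_lintegral {α β : Type*} [MeasurableSpace α] [MeasurableSpace β]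
    (μ : Measure α) [SFinite μ] (ν : Measure β) [SFinite ν] {F : α → β → ℝ≥0∞}
    (hF : Measurable (Function.uncurry F)) :
    ∫⁻ y, (∫⁻ u, F u y ∂μ) ^ 2 ∂ν = ∫⁻ u, ∫⁻ v, ∫⁻ y, F u y * F v y ∂ν ∂μ ∂μ := by
  have integrand_measurable : Measurable fun p : (β × α) × α => F p.1.2 p.1.1 * F p.2 p.1.1 :=
    (hF.comp (f := fun p : (β × α) × α => (p.1.2, p.1.1)) (by fun_prop)).mul
      (hF.comp (f := fun p : (β × α) × α => (p.2, p.1.1)) (by fun_prop))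
  calc ∫⁻ y, (∫⁻ u, F u y ∂μ) ^ 2 ∂ν
      = ∫⁻ y, ∫⁻ u, ∫⁻ v, F u y * F v y ∂μ ∂μ ∂ν := lintegral_congr fun y => by
        have slice_measurable : AEMeasurable (fun u => F u y) μ := hF.of_uncurry_right.aemeasurable
        rw [sq, lintegral_lintegral_mul slice_measurable slice_measurable]
    _ = ∫⁻ u, ∫⁻ y, ∫⁻ v, F u y * F v y ∂μ ∂ν ∂μ :=
        lintegral_lintegral_swap integrand_measurable.lintegral_prod_right'.aemeasurable
    _ = ∫⁻ u, ∫⁻ v, ∫⁻ y, F u y * F v y ∂ν ∂μ ∂μ :=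
        lintegral_congr fun u => lintegral_lintegral_swap
          (integrand_measurable.comp
            (measurable_fst.prodMk measurable_const |>.prodMk measurable_snd)).aemeasurable

theorem lintegral_sq_lintegral_prod {ι α β : Type*} [Fintype ι] [MeasurableSpace α]
    [MeasurableSpace β] (μ : Measure α) [SFinite μ] (ν : Measure β) [SigmaFinite ν]
    {k : α → β → ℝ≥0∞} (hk : Measurable (Function.uncurry k)) :
    ∫⁻ y : ι → β, (∫⁻ u, ∏ i, k u (y i) ∂μ) ^ 2 ∂Measure.pi (fun _ => ν) =
      ∫⁻ u, ∫⁻ v, (∫⁻ z, k u z * k v z ∂ν) ^ Fintype.card ι ∂μ ∂μ := by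
  have prod_measurable :
      Measurable (Function.uncurry fun (u : α) (y : ι → β) => ∏ i, k u (y i)) :=
    Finset.measurable_prod _ fun i _ =>
      hk.comp (measurable_fst.prodMk ((measurable_pi_apply i).comp measurable_snd))
  rw [lintegral_sq_lintegral μ _ prod_measurable]
  refine lintegral_congr fun u => lintegral_congr fun v => ?_
  have pair_measurable : Measurable fun z => k u z * k v z :=
    hk.of_uncurry_left.mul hk.of_uncurry_left
  simp only [← Finset.prod_mul_distrib]
  rw [lintegral_fintype_prod_eq_prod _ fun _ => pair_measurable, Finset.prod_const,
    Finset.card_univ]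

theorem ofReal_sq_integral_le_sq_lintegral_ofReal {α : Type*} [MeasurableSpace α]
    {μ : Measure α} {f : α → ℝ} (hf : 0 ≤ f) :
    ENNReal.ofReal ((∫ x, f x ∂μ) ^ 2) ≤ (∫⁻ x, ENNReal.ofReal (f x) ∂μ) ^ 2 := by
  rw [ENNReal.ofReal_pow (integral_nonneg hf)]
  gcongr
  simpa only [Real.enorm_of_nonneg (integral_nonneg hf), Real.enorm_of_nonneg (hf _)] using
    enorm_integral_le_lintegral_enorm f (μ := μ)

theorem setLIntegral_setLIntegral_sub_le {G : Type*} [AddCommGroup G] [MeasurableSpace G]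
    [MeasurableAdd G] [MeasurableNeg G] (μ : Measure G) [μ.IsAddLeftInvariant]
    [μ.IsNegInvariant] (S : Set G) (f : G → ℝ≥0∞) :
    ∫⁻ u in S, ∫⁻ v in S, f (u - v) ∂μ ∂μ ≤ (∫⁻ w in S - S, f w ∂μ) * μ S := by
  have inner_le : ∀ u ∈ S, ∫⁻ v in S, f (u - v) ∂μ ≤ ∫⁻ w in S - S, f w ∂μ := fun u hu => by
    rw [(μ.measurePreserving_sub_left u).setLIntegral_comp_emb
      (MeasurableEquiv.subLeft u).measurableEmbedding]
    exact lintegral_mono_set (Set.image_subset_iff.mpr fun v hv => Set.sub_mem_sub hu hv)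
  calc ∫⁻ u in S, ∫⁻ v in S, f (u - v) ∂μ ∂μ
      ≤ ∫⁻ _ in S, ∫⁻ w in S - S, f w ∂μ ∂μ := setLIntegral_mono measurable_const inner_le
    _ = (∫⁻ w in S - S, f w ∂μ) * μ S := setLIntegral_const ..

theorem setLIntegral_setLIntegral_norm_sub_rpow_lt_top {E : Type*} [NormedAddCommGroup E]
    [NormedSpace ℝ E] [FiniteDimensional ℝ E] [MeasurableSpace E] [BorelSpace E]
    (μ : Measure E) [μ.IsAddHaarMeasure] (hE : 1 ≤ Module.finrank ℝ E) {c : ℝ}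
    (hc : -Module.finrank ℝ E < c) {S : Set E} (hS : Bornology.IsBounded S) :
    ∫⁻ u in S, ∫⁻ v in S, ENNReal.ofReal (‖u - v‖ ^ c) ∂μ ∂μ < ∞ := by
  have locallyIntegrable : LocallyIntegrable (fun w : E => ‖w‖ ^ c) μ := by
    refine locallyIntegrable_of_norm_le_rpow (C := 1) (α := -c) hE (by linarith)
      (.of_forall fun w => ?_) (measurable_norm.pow_const c).aestronglyMeasurable
    rw [neg_neg, one_mul, Real.norm_of_nonneg (by positivity)]
  have integrableOn : IntegrableOn (fun w : E => ‖w‖ ^ c) (S - S) μ :=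
    (locallyIntegrable.integrableOn_isCompact (hS.sub hS).isCompact_closure).mono_set
      subset_closure
  exact (setLIntegral_setLIntegral_sub_le μ S fun w => ENNReal.ofReal (‖w‖ ^ c)).trans_lt
    (ENNReal.mul_lt_top integrableOn.lintegral_lt_top hS.measure_lt_top)

theorem posPow_nonneg (s a : ℝ) : 0 ≤ posPow s a := by
  unfold posPow
  split_ifs <;> positivity

theorem posPow_of_pos {s : ℝ} (hs : 0 < s) (a : ℝ) : posPow s a = s ^ a := if_pos hs

theorem posPow_of_nonpos {s : ℝ} (hs : s ≤ 0) (a : ℝ) : posPow s a = 0 := if_neg hs.not_gt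

theorem measurable_posPow (a : ℝ) : Measurable fun s => posPow s a :=
  Measurable.ite measurableSet_Ioi (measurable_id.pow_const a) measurable_const

theorem posPow_mul {r : ℝ} (hr : 0 < r) (s a : ℝ) : posPow (r * s) a = r ^ a * posPow s a := by
  rcases le_or_gt s 0 with hs | hs
  · rw [posPow_of_nonpos hs, posPow_of_nonpos (mul_nonpos_of_nonneg_of_nonpos hr.le hs), mul_zero]
  · rw [posPow_of_pos hs, posPow_of_pos (mul_pos hr hs), Real.mul_rpow hr.le hs.le]

/-- The autocorrelation `∫ (s)_+^a (s + r)_+^a ds` of the truncated power at lag `r`, as an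
extended nonnegative real so that it is meaningful without any integrability condition on `a`. -/
noncomputable def posPowAutocorr (a r : ℝ) : ℝ≥0∞ :=
  ∫⁻ s, ENNReal.ofReal (posPow s a * posPow (s + r) a)

theorem lintegral_eq_abs_mul_lintegral_comp_mul_left {r : ℝ} (hr : r ≠ 0) (f : ℝ → ℝ≥0∞) :
    ∫⁻ s, f s = ENNReal.ofReal |r| * ∫⁻ s, f (r * s) := by
  rw [← (measurableEmbedding_mulLeft₀ hr).lintegral_map, ← smul_eq_mul, ← lintegral_smul_measure,
    Real.smul_map_volume_mul_left hr]

theorem posPowAutocorr_eq_rpow_mul {r : ℝ} (hr : 0 < r) (a : ℝ) :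
    posPowAutocorr a r = ENNReal.ofReal (r ^ (2 * a + 1)) * posPowAutocorr a 1 := by
  have integrand_scaling (s : ℝ) : posPow (r * s) a * posPow (r * s + r) a =
      r ^ (2 * a) * (posPow s a * posPow (s + 1) a) := by
    rw [← mul_add_one, posPow_mul hr, posPow_mul hr, two_mul, Real.rpow_add hr]
    ring
  rw [posPowAutocorr, lintegral_eq_abs_mul_lintegral_comp_mul_left hr.ne', abs_of_pos hr]
  simp only [integrand_scaling, ENNReal.ofReal_mul (Real.rpow_nonneg hr.le (2 * a))]
  rw [lintegral_const_mul' _ _ ENNReal.ofReal_ne_top, ← mul_assoc, ← ENNReal.ofReal_mul hr.le,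
    mul_comm r, Real.rpow_add_one hr.ne', posPowAutocorr]

theorem lintegral_posPow_sub_mul_posPow_sub {u v : ℝ} (huv : u ≠ v) (a : ℝ) :
    ∫⁻ z, ENNReal.ofReal (posPow (u - z) a) * ENNReal.ofReal (posPow (v - z) a) =
      ENNReal.ofReal (|u - v| ^ (2 * a + 1)) * posPowAutocorr a 1 := by
  wlog huv_lt : u < v generalizing u v
  · simpa only [mul_comm, abs_sub_comm] using
      this huv.symm (lt_of_le_of_ne (not_lt.mp huv_lt) huv.symm)
  rw [abs_sub_comm, abs_of_pos (sub_pos.mpr huv_lt),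
    ← posPowAutocorr_eq_rpow_mul (sub_pos.mpr huv_lt), posPowAutocorr,
    ← lintegral_sub_left_eq_self _ u]
  refine lintegral_congr fun s => ?_
  rw [← ENNReal.ofReal_mul (posPow_nonneg _ _), sub_sub_cancel,
    show v - (u - s) = s + (v - u) by ring]

-- The factor with the larger argument is at most `1` near the origin and at most `s ^ a` at
-- infinity, so `a > -1` gives integrability at `0` and `2 * a < -1` at infinity.
theorem posPowAutocorr_one_lt_top {a : ℝ} (ha₁ : -1 < a) (ha₂ : a < -1 / 2) :
    posPowAutocorr a 1 < ∞ := by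
  let bound : ℝ → ℝ := (Set.Ioc 0 1).indicator (fun s => s ^ a) +
    (Set.Ioi 1).indicator (fun s => s ^ (2 * a))
  have bound_integrable : Integrable bound := by
    refine .add (IntegrableOn.integrable_indicator ?_ measurableSet_Ioc)
      (IntegrableOn.integrable_indicator ?_ measurableSet_Ioi)
    · exact (intervalIntegrable_iff_integrableOn_Ioc_of_le zero_le_one).mp
        (intervalIntegral.intervalIntegrable_rpow' ha₁)
    · exact integrableOn_Ioi_rpow_of_lt (by linarith) one_pos
  have le_bound (s : ℝ) : posPow s a * posPow (s + 1) a ≤ bound s := by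
    rcases le_or_gt s 0 with hs | hs
    · simp [bound, posPow_of_nonpos hs, hs.not_gt, (hs.trans zero_le_one).not_gt]
    rw [posPow_of_pos hs, posPow_of_pos (by linarith : 0 < s + 1)]
    rcases le_or_gt s 1 with hs₁ | hs₁
    · simpa [bound, hs, hs₁, hs₁.not_gt] using mul_le_of_le_one_right (Real.rpow_nonneg hs.le a)
        (Real.rpow_le_one_of_one_le_of_nonpos (by linarith) (by linarith))
    · simpa [bound, hs₁, hs₁.not_ge, two_mul, Real.rpow_add hs] using
        mul_le_mul_of_nonneg_left (Real.rpow_le_rpow_of_nonpos hs (by linarith) (by linarith))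
          (Real.rpow_nonneg hs.le a)
  exact (lintegral_mono fun s => ENNReal.ofReal_le_ofReal (le_bound s)).trans_lt
    bound_integrable.lintegral_lt_top

theorem lintegral_sq_setLIntegral_prod_posPow_sub_lt_top {ι : Type*} [Fintype ι] [Nonempty ι]
    {a : ℝ} (ha : a < -1 / 2) (hι : -1 < Fintype.card ι * (2 * a + 1)) {S : Set ℝ}
    (hS : Bornology.IsBounded S) :
    ∫⁻ y : ι → ℝ, (∫⁻ u in S, ∏ i, ENNReal.ofReal (posPow (u - y i) a)) ^ 2 < ∞ := by
  have autocorr_pow_lt_top : posPowAutocorr a 1 ^ Fintype.card ι < ∞ := by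
    have card_pos : (1 : ℝ) ≤ Fintype.card ι := by exact_mod_cast Fintype.card_pos
    have neg_one_lt_a : -1 < a := by
      linarith [mul_le_of_one_le_left (by linarith : 2 * a + 1 ≤ 0) card_pos]
    exact ENNReal.pow_lt_top (posPowAutocorr_one_lt_top neg_one_lt_a ha)
  have inner_eq (u v : ℝ) (huv : u ≠ v) :
      (∫⁻ z, ENNReal.ofReal (posPow (u - z) a) * ENNReal.ofReal (posPow (v - z) a)) ^
          Fintype.card ι =
        ENNReal.ofReal (‖u - v‖ ^ (Fintype.card ι * (2 * a + 1))) *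
          posPowAutocorr a 1 ^ Fintype.card ι := by
    rw [lintegral_posPow_sub_mul_posPow_sub huv, mul_pow, ← ENNReal.ofReal_pow (by positivity),
      ← Real.rpow_mul_natCast (abs_nonneg _), mul_comm (2 * a + 1), Real.norm_eq_abs]
  have kernel_measurable :
      Measurable (Function.uncurry fun u z : ℝ => ENNReal.ofReal (posPow (u - z) a)) :=
    ((measurable_posPow a).comp measurable_sub).ennreal_ofReal
  calc ∫⁻ y : ι → ℝ, (∫⁻ u in S, ∏ i, ENNReal.ofReal (posPow (u - y i) a)) ^ 2
      = ∫⁻ u in S, ∫⁻ v in S,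
          (∫⁻ z, ENNReal.ofReal (posPow (u - z) a) * ENNReal.ofReal (posPow (v - z) a)) ^
            Fintype.card ι :=
        lintegral_sq_lintegral_prod _ _ kernel_measurable
    _ = ∫⁻ u in S, ∫⁻ v in S, ENNReal.ofReal (‖u - v‖ ^ (Fintype.card ι * (2 * a + 1))) *
          posPowAutocorr a 1 ^ Fintype.card ι :=
        lintegral_congr fun u => lintegral_congr_ae <| ae_restrict_of_ae <|
          (Measure.ae_ne volume u).mono fun v hv => inner_eq u v hv.symm
    _ = (∫⁻ u in S, ∫⁻ v in S, ENNReal.ofReal (‖u - v‖ ^ (Fintype.card ι * (2 * a + 1)))) *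
          posPowAutocorr a 1 ^ Fintype.card ι := by
        simp only [lintegral_mul_const' _ _ autocorr_pow_lt_top.ne]
    _ < ∞ := ENNReal.mul_lt_top
        (setLIntegral_setLIntegral_norm_sub_rpow_lt_top volume (by simp) (by simpa using hι) hS)
        autocorr_pow_lt_top

theorem stmt_13 (q : ℕ) (hq : 1 ≤ q) (H : ℝ) (hH : H ∈ Set.Ioo (1/2 : ℝ) 1)
    (t : ℝ) (ht : 0 < t) :
    (∫⁻ y : Fin q → ℝ, ENNReal.ofReal ((hermiteKernel q H t y) ^ 2)) < ⊤ := by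
  obtain ⟨half_lt_H, H_lt_one⟩ := hH
  have q_pos : (0 : ℝ) < q := by exact_mod_cast hq
  have : Nonempty (Fin q) := Fin.pos_iff_nonempty.mp hq
  set a : ℝ := -(1/2 + (1 - H) / q) with ha
  have a_lt : a < -1 / 2 := by
    have : 0 < (1 - H) / q := div_pos (sub_pos.mpr H_lt_one) q_pos
    linarith
  have card_mul_exponent : Fintype.card (Fin q) * (2 * a + 1) = 2 * H - 2 := by
    rw [Fintype.card_fin, ha]
    field_simp
    ring
  have kernel_sq_le (y : Fin q → ℝ) : ENNReal.ofReal (hermiteKernel q H t y ^ 2) ≤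
      (∫⁻ u in Set.Ioo 0 t, ∏ i, ENNReal.ofReal (posPow (u - y i) a)) ^ 2 := by
    simp only [← ENNReal.ofReal_prod_of_nonneg fun _ _ => posPow_nonneg _ _]
    exact ofReal_sq_integral_le_sq_lintegral_ofReal fun u =>
      Finset.prod_nonneg fun i _ => posPow_nonneg _ _
  exact (lintegral_mono kernel_sq_le).trans_lt <|
    lintegral_sq_setLIntegral_prod_posPow_sub_lt_top a_lt (by linarith) (Metric.isBounded_Ioo 0 t)
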